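/- arXiv:1203.2008 — 3 statements merged into one kernel-verified Lean document; each statement's English description precedes it below -/
import Mathlib

section
/- Under Assumption 1, with c₃ = 3 d₀^{−4} 2^{4ν+2}/(4ν+2), when Z is uniformly distributed on S² one has, for every L ≥ 1, ∑_{l₁,l₂=1}^{L} ∑_{m₁=−l₁}^{l₁} ∑_{m₂=−l₂}^{l₂} |E_{f₀}( Φ_{l₁m₁}(Z) conj(Φ_{l₂m₂}(Z)) )|² ≤ c₃ L^{4ν+2}, and likewise ∑_{l₁,l₂=1}^{L} ∑_{m₁=−l₁}^{l₁} ∑_{m₂=−l₂}^{l₂} |E_{f₀}( Φ_{l₁m₁}(Z) Φ_{l₂m₂}(Z) )|² ≤ c₃ L^{4ν+2}. -/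
/-!
By orthonormality of the spherical harmonics, the second moments of `Φ` under the uniform law
vanish for `l₁ ≠ l₂`, and for `l₁ = l₂ = l` they are `(4π)⁻¹` times the entries of a product `B C`,
where `B = (f_ε^{⋆l})⁻¹` (`integral_phi_mul`). In the conjugated case `C` is the adjoint of `B`; in
the other case the symmetry `Y_{-n} = (-1)^n conj Y_n` makes `C` the transpose of `B` with rows
reversed and multiplied by signs. In both cases `C` has the Frobenius norm of `B`. Hence
`‖B C‖_F² ≤ ‖B‖_op² ‖B‖_F² ≤ (2l+1) ‖B‖_op⁴ ≤ 3 d₀⁻⁴ l^{4ν+1}` (`block_bound`). The sum over `l` is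
estimated by telescoping Bernoulli's inequality `p l^{p-1} ≤ (l+1)^p - l^p` with `p = 4ν+2`
(`sum_rpow_le`), and `(4π)⁻² ≤ 1`.
-/

noncomputable section

open MeasureTheory Filter Finset Real

namespace SphericalTest

/-- The index set `{-l, …, l}` of spherical harmonic orders at degree `l`. -/
def Idx (l : ℕ) : Finset ℤ := Finset.Icc (-(l : ℤ)) (l : ℤ)

/-- `OpNormLE l A c` : the operator norm of the matrix `A` acting on the span of
`{Y^l_m : m ∈ Idx l}` (identified with vectors indexed by `Idx l`) is at most `c`. -/
def OpNormLE (l : ℕ) (A : ℤ → ℤ → ℂ) (c : ℝ) : Prop :=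
  ∀ h : ℤ → ℂ,
    ∑ m ∈ Idx l, ‖∑ n ∈ Idx l, A m n * h n‖ ^ 2 ≤ c ^ 2 * ∑ n ∈ Idx l, ‖h n‖ ^ 2

/-- `Ainv l` is the (two-sided) inverse of the matrix `A l` on the index block `Idx l`. -/
def IsInvPair (A Ainv : ℕ → ℤ → ℤ → ℂ) : Prop :=
  ∀ l : ℕ, ∀ m ∈ Idx l, ∀ n ∈ Idx l,
    (∑ k ∈ Idx l, A l m k * Ainv l k n) = (if m = n then 1 else 0) ∧
    (∑ k ∈ Idx l, Ainv l m k * A l k n) = (if m = n then 1 else 0)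

/-- Assumption 1 (ordinary smooth noise of order ν): the rotational Fourier matrices
`A l = f_ε^{⋆l}` are invertible with inverse `Ainv l`, and for `l ≥ 1`,
`‖(f_ε^{⋆l})⁻¹‖_op ≤ d₀⁻¹ l^ν` and `‖f_ε^{⋆l}‖_op ≤ d₁ l^{-ν}`. -/
def Assumption1 (A Ainv : ℕ → ℤ → ℤ → ℂ) (d0 d1 ν : ℝ) : Prop :=
  0 < d0 ∧ 0 < d1 ∧ 0 < ν ∧ IsInvPair A Ainv ∧
    (∀ l : ℕ, 1 ≤ l → OpNormLE l (Ainv l) (d0⁻¹ * (l : ℝ) ^ ν)) ∧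
    (∀ l : ℕ, 1 ≤ l → OpNormLE l (A l) (d1 * (l : ℝ) ^ (-ν)))

/-- Assumption 2 (super smooth noise): `‖(f_ε^{⋆l})⁻¹‖_op ≤ d₀⁻¹ l^{-ν₀} exp(l^β/δ)` and
`‖f_ε^{⋆l}‖_op ≤ d₁ l^{ν₁} exp(-l^β/δ)`. -/
def Assumption2 (A Ainv : ℕ → ℤ → ℤ → ℂ) (d0 d1 ν0 ν1 δ β : ℝ) : Prop :=
  ν1 ≤ ν0 ∧ 0 < d0 ∧ 0 < d1 ∧ 0 < δ ∧ 0 < β ∧ IsInvPair A Ainv ∧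
    (∀ l : ℕ, 1 ≤ l →
      OpNormLE l (Ainv l) (d0⁻¹ * (l : ℝ) ^ (-ν0) * Real.exp ((l : ℝ) ^ β / δ))) ∧
    (∀ l : ℕ, 1 ≤ l →
      OpNormLE l (A l) (d1 * (l : ℝ) ^ ν1 * Real.exp (-((l : ℝ) ^ β) / δ)))

variable {Ω : Type*} [MeasurableSpace Ω]

/-- `Φ_{lm}(x) = ∑_{n=-l}^{l} ((f_ε^{⋆l})⁻¹)_{mn} conj(Y^l_n(x))`. -/
def Phi (Ainv : ℕ → ℤ → ℤ → ℂ) (Y : ℕ → ℤ → Ω → ℂ) (l : ℕ) (m : ℤ) (x : Ω) : ℂ :=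
  ∑ n ∈ Idx l, Ainv l m n * star (Y l n x)

/-- Ordered pairs `i₁ < i₂` of observation indices. -/
def pairs (N : ℕ) : Finset (Fin N × Fin N) := Finset.univ.filter fun p => p.1 < p.2

/-- The test statistic
`T_L = (2/(N(N-1))) ∑_{l=1}^{L} ∑_{m=-l}^{l} ∑_{i₁<i₂} Φ_{lm}(Z_{i₁}) conj(Φ_{lm}(Z_{i₂}))`. -/
def TL (Ainv : ℕ → ℤ → ℤ → ℂ) (Y : ℕ → ℤ → Ω → ℂ) (N L : ℕ) (Z : Fin N → Ω) : ℂ :=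
  (2 / ((N : ℂ) * ((N : ℂ) - 1))) *
    ∑ l ∈ Finset.Icc 1 L, ∑ m ∈ Idx l, ∑ p ∈ pairs N,
      Phi Ainv Y l m (Z p.1) * star (Phi Ainv Y l m (Z p.2))

/-- The uniform density `f₀ = (4π)⁻¹` on the sphere. -/
def f0 : Ω → ℝ := fun _ => (4 * π)⁻¹

/-- A probability density with respect to the measure `μ` (the surface measure on `S²`). -/
def IsDensity (μ : Measure Ω) (f : Ω → ℝ) : Prop :=
  Measurable f ∧ (∀ x, 0 ≤ f x) ∧ ∫ x, f x ∂μ = 1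

/-- The law of one observation whose density w.r.t. `μ` is `f`. -/
def law (μ : Measure Ω) (f : Ω → ℝ) : Measure Ω :=
  μ.withDensity fun x => ENNReal.ofReal (f x)

/-- The joint law of `N` i.i.d. observations with density `f`. -/
def lawN (μ : Measure Ω) (N : ℕ) (f : Ω → ℝ) : Measure (Fin N → Ω) :=
  Measure.pi fun _ => law μ f

/-- Spherical Fourier coefficient `f^{⋆l}_m = ∫ f(x) conj(Y^l_m(x)) dx`. -/
def coef (μ : Measure Ω) (Y : ℕ → ℤ → Ω → ℂ) (f : Ω → ℝ) (l : ℕ) (m : ℤ) : ℂ :=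
  ∫ x, (f x : ℂ) * star (Y l m x) ∂μ

/-- Membership in the Sobolev ball `W_s(S², R)`:
`f` is a density and `∑_{l,m} (1+l(l+1))^s |f^{⋆l}_m|² ≤ (4π)⁻¹ + R²`. -/
def InW (μ : Measure Ω) (Y : ℕ → ℤ → Ω → ℂ) (s R : ℝ) (f : Ω → ℝ) : Prop :=
  IsDensity μ f ∧
    ∑' l : ℕ, ∑ m ∈ Idx l,
        ENNReal.ofReal ((1 + (l : ℝ) * ((l : ℝ) + 1)) ^ s * ‖coef μ Y f l m‖ ^ 2)
      ≤ ENNReal.ofReal ((4 * π)⁻¹ + R ^ 2)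

/-- Squared L² distance to the uniform density: `‖f - f₀‖₂²`. -/
def dist2 (μ : Measure Ω) (f : Ω → ℝ) : ℝ := ∫ x, (f x - (4 * π)⁻¹) ^ 2 ∂μ

/-- The alternative `H₁(s, R, ε)`: densities `f ∈ W_s(S², R)` with `‖f - f₀‖₂² ≥ ε`. -/
def H1set (μ : Measure Ω) (Y : ℕ → ℤ → Ω → ℂ) (s R eps : ℝ) : Set (Ω → ℝ) :=
  {f | InW μ Y s R f ∧ eps ≤ dist2 μ f}

/-- Spherical convolution `(f_ε * f)(ω) = ∫_{SO(3)} f_ε(u) f(u⁻¹ ω) du`. -/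
def conv {G : Type*} [Group G] [MeasurableSpace G] [MulAction G Ω]
    (haar : Measure G) (fe : G → ℝ) (f : Ω → ℝ) (ω : Ω) : ℝ :=
  ∫ u, fe u * f (u⁻¹ • ω) ∂haar

/-- Discrete form of `∫ p x^{p-1} dx = x^p`, from Bernoulli's inequality. -/
lemma sum_rpow_le (p : ℝ) (hp : 1 ≤ p) (L : ℕ) :
    ∑ l ∈ Finset.Icc 1 L, p * (l : ℝ) ^ (p - 1) ≤ ((L : ℝ) + 1) ^ p := by
  induction L with
  | zero => simp
  | succ L ih =>
    rw [Finset.sum_Icc_succ_top (by omega)]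
    set x : ℝ := ((L + 1 : ℕ) : ℝ) with hx
    have hx' : (L : ℝ) + 1 = x := by simp [hx]
    have hx0 : 0 < x := by rw [← hx']; positivity
    rw [hx'] at ih
    have hb : 1 + p * x⁻¹ ≤ (1 + x⁻¹) ^ p :=
      one_add_mul_self_le_rpow_one_add (by linarith [inv_pos.2 hx0]) hp
    have h1 : (x + 1) ^ p = x ^ p * (1 + x⁻¹) ^ p := by
      rw [← Real.mul_rpow hx0.le (by positivity)]
      congr 1
      field_simp
    have h2 : x ^ (p - 1) = x ^ p * x⁻¹ := by
      rw [Real.rpow_sub_one hx0.ne', div_eq_mul_inv]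
    rw [h1, h2]
    nlinarith [mul_le_mul_of_nonneg_left hb (Real.rpow_nonneg hx0.le p)]

lemma card_Idx (l : ℕ) : ((Idx l).card : ℝ) = 2 * l + 1 := by
  have : (Idx l).card = 2 * l + 1 := by
    simp only [Idx, Int.card_Icc]
    omega
  rw [this]
  push_cast
  ring

/-- Squared Frobenius norm at most the dimension times the squared operator norm: test the operator
bound on the standard basis vectors. -/
lemma frob_le (l : ℕ) (B : ℤ → ℤ → ℂ) (c : ℝ) (hB : OpNormLE l B c) :
    ∑ m ∈ Idx l, ∑ n ∈ Idx l, ‖B m n‖ ^ 2 ≤ (2 * l + 1) * c ^ 2 := by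
  rw [Finset.sum_comm, ← card_Idx, ← nsmul_eq_mul]
  refine Finset.sum_le_card_nsmul _ _ _ fun n hn => ?_
  have := hB (Pi.single n 1)
  simpa [Pi.single_apply, hn, apply_ite] using this

/-- `‖B C‖_F² ≤ ‖B‖_op² ‖C‖_F²` column by column; the columns `C m` have the norms of the rows of `B`,
so `‖C‖_F = ‖B‖_F` is controlled by `frob_le`. -/
lemma block_bound (l : ℕ) (B C : ℤ → ℤ → ℂ) (c : ℝ) (hB : OpNormLE l B c)
    (hC : ∀ m, ∑ n ∈ Idx l, ‖C m n‖ ^ 2 = ∑ n ∈ Idx l, ‖B m n‖ ^ 2) :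
    ∑ m₁ ∈ Idx l, ∑ m₂ ∈ Idx l, ‖∑ n ∈ Idx l, B m₁ n * C m₂ n‖ ^ 2
      ≤ (2 * l + 1) * c ^ 4 := by
  rw [Finset.sum_comm]
  calc _ ≤ ∑ m₂ ∈ Idx l, c ^ 2 * ∑ n ∈ Idx l, ‖B m₂ n‖ ^ 2 :=
        Finset.sum_le_sum fun m₂ _ => (hB (C m₂)).trans_eq (by rw [hC])
    _ = c ^ 2 * ∑ m₂ ∈ Idx l, ∑ n ∈ Idx l, ‖B m₂ n‖ ^ 2 := by rw [Finset.mul_sum]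
    _ ≤ c ^ 2 * ((2 * l + 1) * c ^ 2) :=
        mul_le_mul_of_nonneg_left (frob_le l B c hB) (sq_nonneg c)
    _ = _ := by ring

/-- Only the diagonal blocks `l₁ = l₂` contribute; each is bounded by `block_bound`, and the sum over
degrees by `sum_rpow_le`. -/
lemma total_bound (B C : ℕ → ℤ → ℤ → ℂ) (E : ℕ → ℕ → ℤ → ℤ → ℂ) (d0 ν : ℝ) (hν : 0 < ν)
    (hB : ∀ l : ℕ, 1 ≤ l → OpNormLE l (B l) (d0⁻¹ * (l : ℝ) ^ ν))
    (hC : ∀ l m, ∑ n ∈ Idx l, ‖C l m n‖ ^ 2 = ∑ n ∈ Idx l, ‖B l m n‖ ^ 2)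
    (hE : ∀ l₁ l₂ m₁ m₂, E l₁ l₂ m₁ m₂ =
      if l₁ = l₂ then ((4 * π)⁻¹ : ℝ) * ∑ n ∈ Idx l₁, B l₁ m₁ n * C l₂ m₂ n else 0)
    (L : ℕ) (hL : 1 ≤ L) :
    ∑ l₁ ∈ Finset.Icc 1 L, ∑ l₂ ∈ Finset.Icc 1 L, ∑ m₁ ∈ Idx l₁, ∑ m₂ ∈ Idx l₂,
        ‖E l₁ l₂ m₁ m₂‖ ^ 2
      ≤ 3 * d0⁻¹ ^ 4 * (2 : ℝ) ^ (4 * ν + 2) / (4 * ν + 2) * (L : ℝ) ^ (4 * ν + 2) := by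
  have hpi : ‖(((4 * π)⁻¹ : ℝ) : ℂ)‖ ≤ 1 := by
    rw [Complex.norm_real, Real.norm_of_nonneg (by positivity)]
    exact inv_le_one_of_one_le₀ (by linarith [Real.pi_gt_three])
  have hdiag : ∀ l₁ ∈ Finset.Icc 1 L,
      ∑ l₂ ∈ Finset.Icc 1 L, ∑ m₁ ∈ Idx l₁, ∑ m₂ ∈ Idx l₂, ‖E l₁ l₂ m₁ m₂‖ ^ 2
        ≤ 3 * d0⁻¹ ^ 4 * (l₁ : ℝ) ^ (4 * ν + 2 - 1) := by
    intro l hl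
    have hl1 := (Finset.mem_Icc.1 hl).1
    have hlr : (1 : ℝ) ≤ l := by exact_mod_cast hl1
    rw [Finset.sum_eq_single_of_mem l hl]
    · calc _ ≤ ∑ m₁ ∈ Idx l, ∑ m₂ ∈ Idx l, ‖∑ n ∈ Idx l, B l m₁ n * C l m₂ n‖ ^ 2 := by
            refine Finset.sum_le_sum fun m₁ _ => Finset.sum_le_sum fun m₂ _ => ?_
            rw [hE, if_pos rfl, norm_mul]
            exact pow_le_pow_left₀ (by positivity)
              (mul_le_of_le_one_left (norm_nonneg _) hpi) 2
        _ ≤ (2 * l + 1) * (d0⁻¹ * (l : ℝ) ^ ν) ^ 4 := block_bound l _ _ _ (hB l hl1) (hC l)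
        _ ≤ (3 * l) * (d0⁻¹ * (l : ℝ) ^ ν) ^ 4 := by
            have : 0 ≤ (d0⁻¹ * (l : ℝ) ^ ν) ^ 4 := by positivity
            exact mul_le_mul_of_nonneg_right (by linarith) this
        _ = _ := by
            have h4 : ((l : ℝ) ^ ν) ^ 4 = (l : ℝ) ^ (4 * ν) := by
              rw [← Real.rpow_mul_natCast (by positivity)]
              congr 1
              push_cast
              ring
            rw [show 4 * ν + 2 - 1 = 4 * ν + 1 by ring, Real.rpow_add_one (by positivity),
              mul_pow, h4]
            ring
    · intro l₂ _ hne
      refine Finset.sum_eq_zero fun m₁ _ => Finset.sum_eq_zero fun m₂ _ => ?_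
      rw [hE, if_neg (Ne.symm hne)]
      simp
  have hLr : (1 : ℝ) ≤ L := by exact_mod_cast hL
  have hp : 0 < 4 * ν + 2 := by linarith
  have hsum := sum_rpow_le (4 * ν + 2) (by linarith) L
  rw [← Finset.mul_sum] at hsum
  have h2L : ((L : ℝ) + 1) ^ (4 * ν + 2) ≤ 2 ^ (4 * ν + 2) * (L : ℝ) ^ (4 * ν + 2) := by
    rw [← Real.mul_rpow (by norm_num) (by positivity)]
    exact Real.rpow_le_rpow (by positivity) (by linarith) hp.le
  calc _ ≤ ∑ l ∈ Finset.Icc 1 L, 3 * d0⁻¹ ^ 4 * (l : ℝ) ^ (4 * ν + 2 - 1) :=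
        Finset.sum_le_sum hdiag
    _ = 3 * d0⁻¹ ^ 4 * ∑ l ∈ Finset.Icc 1 L, (l : ℝ) ^ (4 * ν + 2 - 1) := by
        rw [Finset.mul_sum]
    _ ≤ 3 * d0⁻¹ ^ 4 * (2 ^ (4 * ν + 2) * (L : ℝ) ^ (4 * ν + 2) / (4 * ν + 2)) := by
        refine mul_le_mul_of_nonneg_left ?_ (by positivity)
        rw [le_div_iff₀ hp]
        linarith
    _ = _ := by ring

/-- Pairing `Φ_{l₁m}` with a combination of harmonics of degree `l₂`. -/
lemma integral_phi_mul {Ω : Type*} [MeasurableSpace Ω]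
    (μ : Measure Ω) (Y : ℕ → ℤ → Ω → ℂ) (B : ℕ → ℤ → ℤ → ℂ)
    (hμ : μ Set.univ = ENNReal.ofReal (4 * π))
    (hYmeas : ∀ l m, Measurable (Y l m))
    (hYorth : ∀ l₁ : ℕ, ∀ m₁ ∈ Idx l₁, ∀ l₂ : ℕ, ∀ m₂ ∈ Idx l₂,
      ∫ x, Y l₁ m₁ x * star (Y l₂ m₂ x) ∂μ = if l₁ = l₂ ∧ m₁ = m₂ then 1 else 0)
    (hYadd : ∀ (l : ℕ) (x : Ω), ∑ m ∈ Idx l, ‖Y l m x‖ ^ 2 ≤ (2 * (l : ℝ) + 1) / (4 * π))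
    (l₁ l₂ : ℕ) (m : ℤ) (c : ℤ → ℂ) :
    ∫ z, Phi B Y l₁ m z * ∑ n ∈ Idx l₂, c n * Y l₂ n z ∂(law μ f0)
      = if l₁ = l₂ then ((4 * π)⁻¹ : ℝ) * ∑ n ∈ Idx l₁, B l₁ m n * c n else 0 := by
  have : IsFiniteMeasure μ := ⟨by rw [hμ]; exact ENNReal.ofReal_lt_top⟩
  have hbd : ∀ l, ∀ n ∈ Idx l, ∀ x, ‖Y l n x‖ ≤ √((2 * (l : ℝ) + 1) / (4 * π)) := by
    intro l n hn x
    refine Real.le_sqrt_of_sq_le (le_trans ?_ (hYadd l x))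
    exact Finset.single_le_sum (f := fun n => ‖Y l n x‖ ^ 2) (fun _ _ => by positivity) hn
  have hint : ∀ n₁ ∈ Idx l₁, ∀ n₂ ∈ Idx l₂,
      Integrable (fun x => Y l₂ n₂ x * star (Y l₁ n₁ x)) μ := by
    intro n₁ h₁ n₂ h₂
    refine Integrable.of_bound ?_
      (√((2 * (l₂ : ℝ) + 1) / (4 * π)) * √((2 * (l₁ : ℝ) + 1) / (4 * π))) (.of_forall fun x => ?_)
    · exact ((hYmeas _ _).mul (continuous_star.measurable.comp (hYmeas _ _))).aestronglyMeasurable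
    · rw [norm_mul, norm_star]
      exact mul_le_mul (hbd _ _ h₂ x) (hbd _ _ h₁ x) (norm_nonneg _) (Real.sqrt_nonneg _)
  have hlaw : law μ f0 = ENNReal.ofReal (4 * π)⁻¹ • μ := by
    simp only [law, f0]
    exact withDensity_const _
  have hexp : ∀ z, Phi B Y l₁ m z * ∑ n ∈ Idx l₂, c n * Y l₂ n z
      = ∑ n₁ ∈ Idx l₁, ∑ n₂ ∈ Idx l₂,
          (B l₁ m n₁ * c n₂) * (Y l₂ n₂ z * star (Y l₁ n₁ z)) := by
    intro z
    rw [Phi, Finset.sum_mul_sum]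
    exact Finset.sum_congr rfl fun _ _ => Finset.sum_congr rfl fun _ _ => by ring
  have hmain : ∫ z, Phi B Y l₁ m z * ∑ n ∈ Idx l₂, c n * Y l₂ n z ∂μ
      = if l₁ = l₂ then ∑ n ∈ Idx l₁, B l₁ m n * c n else 0 := by
    simp_rw [hexp]
    rw [integral_finsetSum _ fun n₁ h₁ => integrable_finsetSum _ fun n₂ h₂ =>
      (hint n₁ h₁ n₂ h₂).const_mul _]
    have hinner : ∀ n₁ ∈ Idx l₁,
        ∫ z, ∑ n₂ ∈ Idx l₂, (B l₁ m n₁ * c n₂) * (Y l₂ n₂ z * star (Y l₁ n₁ z)) ∂μ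
          = ∑ n₂ ∈ Idx l₂, (B l₁ m n₁ * c n₂) * if l₂ = l₁ ∧ n₂ = n₁ then 1 else 0 := by
      intro n₁ h₁
      rw [integral_finsetSum _ fun n₂ h₂ => (hint n₁ h₁ n₂ h₂).const_mul _]
      exact Finset.sum_congr rfl fun n₂ h₂ => by
        rw [integral_const_mul, hYorth l₂ n₂ h₂ l₁ n₁ h₁]
    rw [Finset.sum_congr rfl hinner]
    by_cases h : l₁ = l₂
    · subst h
      rw [if_pos rfl]
      exact Finset.sum_congr rfl fun n hn => by simp [hn]
    · simp [h, Ne.symm h]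
  rw [hlaw, integral_smul_measure, hmain, ENNReal.toReal_ofReal (by positivity)]
  split_ifs
  · rw [Complex.real_smul]
  · simp

lemma sum_Idx_neg {M : Type*} [AddCommMonoid M] (l : ℕ) (f : ℤ → M) :
    ∑ n ∈ Idx l, f (-n) = ∑ n ∈ Idx l, f n := by
  refine Finset.sum_nbij' (fun n => -n) (fun n => -n) ?_ ?_ ?_ ?_ ?_ <;> simp [Idx] <;> omega

/-- `Φ_{lm}` as a combination of unconjugated harmonics, by `Y_{-n} = (-1)^n conj Y_n`. -/
lemma phi_eq_sum {Ω : Type*} [MeasurableSpace Ω] (Y : ℕ → ℤ → Ω → ℂ) (B : ℕ → ℤ → ℤ → ℂ)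
    (hYconj : ∀ (l : ℕ) (m : ℤ) (x : Ω), Y l (-m) x = (-1 : ℂ) ^ m * star (Y l m x))
    (l : ℕ) (m : ℤ) (x : Ω) :
    Phi B Y l m x = ∑ n ∈ Idx l, (B l m (-n) * (-1 : ℂ) ^ n) * Y l n x := by
  rw [Phi, ← sum_Idx_neg]
  refine Finset.sum_congr rfl fun n _ => ?_
  rw [hYconj, star_mul', star_star, star_zpow₀, star_neg, star_one, mul_assoc]

/-- **Lemma 2 (second moments of Φ under the uniform law).**
Under Assumption 1, with `c₃ = 3 d₀⁻⁴ 2^{4ν+2}/(4ν+2)`, when `Z` is uniformly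
distributed on `S²` one has, for every `L ≥ 1`,
`∑_{l₁,l₂=1}^{L} ∑_{m₁,m₂} |E_{f₀}( Φ_{l₁m₁}(Z) conj(Φ_{l₂m₂}(Z)) )|² ≤ c₃ L^{4ν+2}`
and likewise with `Φ_{l₂m₂}(Z)` in place of `conj(Φ_{l₂m₂}(Z))`. -/
theorem statement6
    {Ω : Type*} [MeasurableSpace Ω]
    (μ : Measure Ω) (Y : ℕ → ℤ → Ω → ℂ) (A Ainv : ℕ → ℤ → ℤ → ℂ)
    (hμ : μ Set.univ = ENNReal.ofReal (4 * π))
    (hYmeas : ∀ l m, Measurable (Y l m))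
    (hYorth : ∀ l₁ : ℕ, ∀ m₁ ∈ Idx l₁, ∀ l₂ : ℕ, ∀ m₂ ∈ Idx l₂,
      ∫ x, Y l₁ m₁ x * star (Y l₂ m₂ x) ∂μ = if l₁ = l₂ ∧ m₁ = m₂ then 1 else 0)
    (hYadd : ∀ (l : ℕ) (x : Ω), ∑ m ∈ Idx l, ‖Y l m x‖ ^ 2 ≤ (2 * (l : ℝ) + 1) / (4 * π))
    (hYconj : ∀ (l : ℕ) (m : ℤ) (x : Ω), Y l (-m) x = (-1 : ℂ) ^ m * star (Y l m x))
    (d0 d1 ν : ℝ) (hA1 : Assumption1 A Ainv d0 d1 ν) :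
    ∀ L : ℕ, 1 ≤ L →
      (∑ l₁ ∈ Finset.Icc 1 L, ∑ l₂ ∈ Finset.Icc 1 L, ∑ m₁ ∈ Idx l₁, ∑ m₂ ∈ Idx l₂,
          ‖∫ z, Phi Ainv Y l₁ m₁ z * star (Phi Ainv Y l₂ m₂ z) ∂(law μ f0)‖ ^ 2
        ≤ 3 * d0⁻¹ ^ 4 * (2 : ℝ) ^ (4 * ν + 2) / (4 * ν + 2) * (L : ℝ) ^ (4 * ν + 2)) ∧
      (∑ l₁ ∈ Finset.Icc 1 L, ∑ l₂ ∈ Finset.Icc 1 L, ∑ m₁ ∈ Idx l₁, ∑ m₂ ∈ Idx l₂,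
          ‖∫ z, Phi Ainv Y l₁ m₁ z * Phi Ainv Y l₂ m₂ z ∂(law μ f0)‖ ^ 2
        ≤ 3 * d0⁻¹ ^ 4 * (2 : ℝ) ^ (4 * ν + 2) / (4 * ν + 2) * (L : ℝ) ^ (4 * ν + 2)) := by
  obtain ⟨-, -, hν, -, hB, -⟩ := hA1
  intro L hL
  have hI := integral_phi_mul μ Y Ainv hμ hYmeas hYorth hYadd
  constructor
  · refine total_bound Ainv (fun l m n => star (Ainv l m n)) _ d0 ν hν hB ?_ ?_ L hL
    · intro l m
      simp
    · intro l₁ l₂ m₁ m₂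
      rw [← hI]
      simp [Phi, star_sum]
  · refine total_bound Ainv (fun l m n => Ainv l m (-n) * (-1 : ℂ) ^ n) _ d0 ν hν hB ?_ ?_ L hL
    · intro l m
      rw [← sum_Idx_neg l fun n => ‖Ainv l m n‖ ^ 2]
      simp
    · intro l₁ l₂ m₁ m₂
      rw [← hI]
      simp_rw [← phi_eq_sum Y Ainv hYconj]

end SphericalTest
end
end

section
/- Under Assumption 1, setting C₂² = 9 d₀^{−2}/(8π(2ν+2)), for every even integer L ≥ 2, every γ > 0 and every choice of signs θ_{lm} ∈ {−γ, +γ}, the function f_θ = f₀ + ∑_{l=L/2}^{L−1} ∑_{m=−l}^{l} θ_{lm} φ_{lm}, where φ_{lm} = ∑_{n=−l}^{l} ((f_ε^{⋆l})⁻¹)_{nm} Y^l_n, satisfies |f_θ(x) − f₀(x)|² ≤ C₂² γ² L^{2ν+4} for every x ∈ S². In particular, if s ≥ 1 and γ² = c₁ L^{−2(ν+s+1)} with c₁ ≤ (ν+1)/(9π d₀^{−2}), then f_θ ≥ 0 everywhere, and since ∫ φ_{lm} = 0 for l ≥ 1, f_θ is a probability density on S². -/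
/-!
Write `f_θ - f₀ = ∑_l ⟨(f_ε^{⋆l})⁻¹ θ_l, Y^l⟩`. For fixed `l ≥ 1`, Cauchy–Schwarz over the orders,
the operator norm bound and the addition inequality give
`⟨(f_ε^{⋆l})⁻¹ θ_l, Y^l(x)⟩² ≤ d₀⁻² l^{2ν} (2l+1) γ² (2l+1)/(4π) ≤ 9 d₀⁻² γ²/(4π) l^{2ν+2}`
(`block_bound`, using `2l+1 ≤ 3l`). Cauchy–Schwarz over the `L/2` degrees
`l = L/2, …, L-1`, together with `∑_{l<L} l^p ≤ L^{p+1}/(p+1)` for `p = 2ν+2`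
(`sum_rpow_le`), yields the pointwise bound (`pointwise_bound`); the argument leaves some room,
since it would allow `2ν+3` in place of `2ν+2` in the denominator of `C₂²`.

When `γ² = c₁ L^{-2(ν+s+1)}`, that bound is at most `(4π)⁻² L^{2-2s} ≤ (4π)⁻²`, whence `f_θ ≥ 0`.
Every `Y^l_m` with `l ≥ 1` is bounded and orthogonal to the constant `Y^0_0`, so it has integral
zero; hence `∫ f_θ = ∫ f₀ = 1`.
-/

noncomputable section

open MeasureTheory Filter Finset Real

namespace SphericalTestR

/-- The index set `{-l, …, l}` of spherical harmonic orders at degree `l`. -/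
def Idx (l : ℕ) : Finset ℤ := Finset.Icc (-(l : ℤ)) (l : ℤ)

/-- Operator norm bound for a real matrix acting on the block `Idx l`. -/
def OpNormLE (l : ℕ) (A : ℤ → ℤ → ℝ) (c : ℝ) : Prop :=
  ∀ h : ℤ → ℝ,
    ∑ m ∈ Idx l, (∑ n ∈ Idx l, A m n * h n) ^ 2 ≤ c ^ 2 * ∑ n ∈ Idx l, (h n) ^ 2

/-- `Ainv l` is the (two-sided) inverse of `A l` on the block `Idx l`. -/
def IsInvPair (A Ainv : ℕ → ℤ → ℤ → ℝ) : Prop :=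
  ∀ l : ℕ, ∀ m ∈ Idx l, ∀ n ∈ Idx l,
    (∑ k ∈ Idx l, A l m k * Ainv l k n) = (if m = n then 1 else 0) ∧
    (∑ k ∈ Idx l, Ainv l m k * A l k n) = (if m = n then 1 else 0)

/-- Assumption 1 (ordinary smooth noise of order ν), for the real-form basis. -/
def Assumption1 (A Ainv : ℕ → ℤ → ℤ → ℝ) (d0 d1 ν : ℝ) : Prop :=
  0 < d0 ∧ 0 < d1 ∧ 0 < ν ∧ IsInvPair A Ainv ∧
    (∀ l : ℕ, 1 ≤ l → OpNormLE l (Ainv l) (d0⁻¹ * (l : ℝ) ^ ν)) ∧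
    (∀ l : ℕ, 1 ≤ l → OpNormLE l (A l) (d1 * (l : ℝ) ^ (-ν)))

variable {Ω : Type*} [MeasurableSpace Ω]

/-- The uniform density `f₀ = (4π)⁻¹` on the sphere. -/
def f0 : Ω → ℝ := fun _ => (4 * π)⁻¹

/-- A probability density with respect to `μ` (the surface measure on `S²`). -/
def IsDensity (μ : Measure Ω) (f : Ω → ℝ) : Prop :=
  Measurable f ∧ (∀ x, 0 ≤ f x) ∧ ∫ x, f x ∂μ = 1

/-- The law of one observation with density `f`. -/
def law (μ : Measure Ω) (f : Ω → ℝ) : Measure Ω :=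
  μ.withDensity fun x => ENNReal.ofReal (f x)

/-- The joint law of `N` i.i.d. observations with density `f`. -/
def lawN (μ : Measure Ω) (N : ℕ) (f : Ω → ℝ) : Measure (Fin N → Ω) :=
  Measure.pi fun _ => law μ f

/-- Real spherical Fourier coefficient `⟨f, Y^l_m⟩ = ∫ f(x) Y^l_m(x) dx`. -/
def coefR (μ : Measure Ω) (Y : ℕ → ℤ → Ω → ℝ) (f : Ω → ℝ) (l : ℕ) (m : ℤ) : ℝ :=
  ∫ x, f x * Y l m x ∂μ

/-- The deconvolved basis function `φ_{lm} = ∑_{n} ((f_ε^{⋆l})⁻¹)_{nm} Y^l_n`,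
so that `f_ε * φ_{lm} = Y^l_m`. -/
def phiLB (Ainv : ℕ → ℤ → ℤ → ℝ) (Y : ℕ → ℤ → Ω → ℝ) (l : ℕ) (m : ℤ) (x : Ω) : ℝ :=
  ∑ n ∈ Idx l, Ainv l n m * Y l n x

/-- The perturbed hypothesis function
`f_θ = f₀ + ∑_{l=L/2}^{L-1} ∑_{m=-l}^{l} θ_{lm} φ_{lm}`. -/
def ftheta (Ainv : ℕ → ℤ → ℤ → ℝ) (Y : ℕ → ℤ → Ω → ℝ) (L : ℕ) (θ : ℕ → ℤ → ℝ)
    (x : Ω) : ℝ :=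
  (4 * π)⁻¹ + ∑ l ∈ Finset.Icc (L / 2) (L - 1), ∑ m ∈ Idx l, θ l m * phiLB Ainv Y l m x

/-- `θ` is a choice of signs `±γ` on the block `L/2 ≤ l ≤ L-1`, `-l ≤ m ≤ l`. -/
def IsSigns (L : ℕ) (γ : ℝ) (θ : ℕ → ℤ → ℝ) : Prop :=
  ∀ l ∈ Finset.Icc (L / 2) (L - 1), ∀ m ∈ Idx l, θ l m = γ ∨ θ l m = -γ

/-- Spherical convolution `(f_ε * f)(ω) = ∫_{SO(3)} f_ε(u) f(u⁻¹ ω) du`. -/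
def conv {G : Type*} [Group G] [MeasurableSpace G] [MulAction G Ω]
    (haar : Measure G) (fe : G → ℝ) (f : Ω → ℝ) (ω : Ω) : ℝ :=
  ∫ u, fe u * f (u⁻¹ • ω) ∂haar

/-- One telescoping step of the comparison of `∑ l ^ p` with `∫ t ^ p dt`; it is Bernoulli's
inequality for `(1 + 1 / l) ^ (p + 1)`. -/
lemma rpow_step {p : ℝ} (hp : 0 < p) {l : ℕ} (hl : 1 ≤ l) :
    (p + 1) * (l : ℝ) ^ p ≤ ((l + 1 : ℕ) : ℝ) ^ (p + 1) - (l : ℝ) ^ (p + 1) := by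
  have hl0 : (0 : ℝ) < l := by exact_mod_cast hl
  have hB := one_add_mul_self_le_rpow_one_add (s := (l : ℝ)⁻¹) (p := p + 1)
    (by have := inv_pos.2 hl0; linarith) (by linarith)
  have hfac : ((l + 1 : ℕ) : ℝ) ^ (p + 1) = (l : ℝ) ^ (p + 1) * (1 + (l : ℝ)⁻¹) ^ (p + 1) := by
    rw [← Real.mul_rpow hl0.le (by positivity)]
    congr 1
    push_cast
    field_simp
  have hp1 : (l : ℝ) ^ (p + 1) = (l : ℝ) ^ p * l := Real.rpow_add_one hl0.ne' p
  have hmul := mul_le_mul_of_nonneg_left hB (by positivity : (0 : ℝ) ≤ (l : ℝ) ^ (p + 1))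
  rw [← hfac] at hmul
  have hexp : (l : ℝ) ^ (p + 1) * (1 + (p + 1) * (l : ℝ)⁻¹)
      = (l : ℝ) ^ (p + 1) + (p + 1) * (l : ℝ) ^ p := by
    rw [hp1]
    field_simp
  linarith

/-- Discrete analogue of `∫₀ᴸ t ^ p dt = L ^ (p + 1) / (p + 1)`. -/
lemma sum_rpow_le {p : ℝ} (hp : 0 < p) (L : ℕ) :
    ∑ l ∈ Finset.range L, (l : ℝ) ^ p ≤ (L : ℝ) ^ (p + 1) / (p + 1) := by
  have hp1 : 0 < p + 1 := by linarith
  induction L with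
  | zero => simp [Real.zero_rpow hp1.ne']
  | succ k ih =>
    rw [Finset.sum_range_succ]
    rw [le_div_iff₀ hp1] at ih ⊢
    rcases Nat.eq_zero_or_pos k with rfl | hk
    · simp [Real.zero_rpow hp.ne']
    · have := rpow_step hp hk
      linarith

lemma card_Idx (l : ℕ) : ((Idx l).card : ℝ) = 2 * l + 1 := by
  have h : (Idx l).card = 2 * l + 1 := by
    simp only [Idx, Int.card_Icc]
    omega
  rw [h]
  push_cast
  ring

/-- The contribution of a single degree `l` to `f_θ - f₀` is the pairing of the coefficient
vector `(f_ε^{⋆l})⁻¹ θ_l` with `Y^l(x)`, controlled by Cauchy–Schwarz. -/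
lemma block_bound {Ω : Type*} (Y : ℕ → ℤ → Ω → ℝ)
    (hYadd : ∀ (l : ℕ) (x : Ω), ∑ m ∈ Idx l, (Y l m x) ^ 2 ≤ (2 * (l : ℝ) + 1) / (4 * π))
    (Ainv : ℕ → ℤ → ℤ → ℝ) (d0 ν γ : ℝ) (l : ℕ) (hl : 1 ≤ l)
    (hop : OpNormLE l (Ainv l) (d0⁻¹ * (l : ℝ) ^ ν))
    (θ : ℕ → ℤ → ℝ) (hθ : ∀ m ∈ Idx l, θ l m = γ ∨ θ l m = -γ) (x : Ω) :
    (∑ m ∈ Idx l, θ l m * phiLB Ainv Y l m x) ^ 2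
      ≤ 9 * d0⁻¹ ^ 2 * γ ^ 2 / (4 * π) * (l : ℝ) ^ (2 * ν + 2) := by
  have hl0 : (0 : ℝ) < l := by exact_mod_cast hl
  have hl1 : (1 : ℝ) ≤ l := by exact_mod_cast hl
  have hswap : ∑ m ∈ Idx l, θ l m * phiLB Ainv Y l m x
      = ∑ n ∈ Idx l, (∑ m ∈ Idx l, Ainv l n m * θ l m) * Y l n x := by
    simp only [phiLB, Finset.mul_sum, Finset.sum_mul]
    rw [Finset.sum_comm]
    refine Finset.sum_congr rfl fun n _ => Finset.sum_congr rfl fun m _ => ?_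
    ring
  have hθ2 : ∑ m ∈ Idx l, (θ l m) ^ 2 = (2 * l + 1) * γ ^ 2 := by
    rw [← card_Idx, ← nsmul_eq_mul, ← Finset.sum_const]
    refine Finset.sum_congr rfl fun m hm => ?_
    rcases hθ m hm with h | h <;> rw [h]
    ring
  have hpow : (l : ℝ) ^ (2 * ν + 2) = ((l : ℝ) ^ ν) ^ 2 * (l : ℝ) ^ 2 := by
    rw [Real.rpow_add hl0, mul_comm 2 ν, Real.rpow_mul hl0.le]
    norm_cast
  have hc := hop (θ l)
  rw [hθ2] at hc
  have hsq : (2 * (l : ℝ) + 1) ^ 2 ≤ 9 * (l : ℝ) ^ 2 := by nlinarith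
  rw [hswap]
  calc (∑ n ∈ Idx l, (∑ m ∈ Idx l, Ainv l n m * θ l m) * Y l n x) ^ 2
      ≤ (∑ n ∈ Idx l, (∑ m ∈ Idx l, Ainv l n m * θ l m) ^ 2) * ∑ n ∈ Idx l, (Y l n x) ^ 2 :=
        Finset.sum_mul_sq_le_sq_mul_sq _ _ _
    _ ≤ ((d0⁻¹ * (l : ℝ) ^ ν) ^ 2 * ((2 * l + 1) * γ ^ 2)) * ((2 * (l : ℝ) + 1) / (4 * π)) :=
        mul_le_mul hc (hYadd l x) (Finset.sum_nonneg fun _ _ => sq_nonneg _) (by positivity)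
    _ = d0⁻¹ ^ 2 * γ ^ 2 / (4 * π) * ((l : ℝ) ^ ν) ^ 2 * (2 * (l : ℝ) + 1) ^ 2 := by ring
    _ ≤ d0⁻¹ ^ 2 * γ ^ 2 / (4 * π) * ((l : ℝ) ^ ν) ^ 2 * (9 * (l : ℝ) ^ 2) :=
        mul_le_mul_of_nonneg_left hsq (by positivity)
    _ = 9 * d0⁻¹ ^ 2 * γ ^ 2 / (4 * π) * (l : ℝ) ^ (2 * ν + 2) := by rw [hpow]; ring

lemma pointwise_bound {Ω : Type*} (Y : ℕ → ℤ → Ω → ℝ)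
    (hYadd : ∀ (l : ℕ) (x : Ω), ∑ m ∈ Idx l, (Y l m x) ^ 2 ≤ (2 * (l : ℝ) + 1) / (4 * π))
    (Ainv : ℕ → ℤ → ℤ → ℝ) (d0 ν γ : ℝ) (hν : 0 < ν)
    (hop : ∀ l : ℕ, 1 ≤ l → OpNormLE l (Ainv l) (d0⁻¹ * (l : ℝ) ^ ν))
    (L : ℕ) (hL : 2 ≤ L) (hLe : L % 2 = 0)
    (θ : ℕ → ℤ → ℝ) (hθ : IsSigns L γ θ) (x : Ω) :
    (ftheta Ainv Y L θ x - (4 * π)⁻¹) ^ 2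
      ≤ 9 * d0⁻¹ ^ 2 / (8 * π * (2 * ν + 2)) * γ ^ 2 * (L : ℝ) ^ (2 * ν + 4) := by
  have hL0 : (0 : ℝ) < L := by positivity
  have hcard : ((Finset.Icc (L / 2) (L - 1)).card : ℝ) = L / 2 := by
    have h : 2 * (Finset.Icc (L / 2) (L - 1)).card = L := by
      rw [Nat.card_Icc]
      omega
    have h' : (2 : ℝ) * ((Finset.Icc (L / 2) (L - 1)).card : ℝ) = L := by exact_mod_cast h
    linarith
  have hsum : ∑ l ∈ Finset.Icc (L / 2) (L - 1), (l : ℝ) ^ (2 * ν + 2)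
      ≤ (L : ℝ) ^ (2 * ν + 3) / (2 * ν + 2) := by
    calc ∑ l ∈ Finset.Icc (L / 2) (L - 1), (l : ℝ) ^ (2 * ν + 2)
        ≤ ∑ l ∈ Finset.range L, (l : ℝ) ^ (2 * ν + 2) := by
          refine Finset.sum_le_sum_of_subset_of_nonneg ?_ fun _ _ _ => by positivity
          intro l hl
          rw [Finset.mem_Icc] at hl
          rw [Finset.mem_range]
          omega
      _ ≤ (L : ℝ) ^ (2 * ν + 2 + 1) / (2 * ν + 2 + 1) := sum_rpow_le (by linarith) L
      _ ≤ (L : ℝ) ^ (2 * ν + 2 + 1) / (2 * ν + 2) :=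
          div_le_div_of_nonneg_left (by positivity) (by linarith) (by linarith)
      _ = (L : ℝ) ^ (2 * ν + 3) / (2 * ν + 2) := by
          rw [show 2 * ν + 2 + 1 = 2 * ν + 3 by ring]
  have hpow : (L : ℝ) ^ (2 * ν + 4) = (L : ℝ) ^ (2 * ν + 3) * L := by
    rw [← Real.rpow_add_one hL0.ne']
    congr 1
    ring
  have hdiff : ftheta Ainv Y L θ x - (4 * π)⁻¹
      = ∑ l ∈ Finset.Icc (L / 2) (L - 1), ∑ m ∈ Idx l, θ l m * phiLB Ainv Y l m x := by
    simp [ftheta]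
  rw [hdiff]
  calc (∑ l ∈ Finset.Icc (L / 2) (L - 1), ∑ m ∈ Idx l, θ l m * phiLB Ainv Y l m x) ^ 2
      ≤ (Finset.Icc (L / 2) (L - 1)).card *
          ∑ l ∈ Finset.Icc (L / 2) (L - 1), (∑ m ∈ Idx l, θ l m * phiLB Ainv Y l m x) ^ 2 :=
        sq_sum_le_card_mul_sum_sq
    _ ≤ L / 2 * ∑ l ∈ Finset.Icc (L / 2) (L - 1),
          9 * d0⁻¹ ^ 2 * γ ^ 2 / (4 * π) * (l : ℝ) ^ (2 * ν + 2) := by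
        rw [hcard]
        refine mul_le_mul_of_nonneg_left (Finset.sum_le_sum fun l hl => ?_) (by positivity)
        have hl1 : 1 ≤ l := by
          rw [Finset.mem_Icc] at hl
          omega
        exact block_bound Y hYadd Ainv d0 ν γ l hl1 (hop l hl1) θ (hθ l hl) x
    _ = L / 2 * (9 * d0⁻¹ ^ 2 * γ ^ 2 / (4 * π)) *
          ∑ l ∈ Finset.Icc (L / 2) (L - 1), (l : ℝ) ^ (2 * ν + 2) := by
        rw [← Finset.mul_sum]
        ring
    _ ≤ L / 2 * (9 * d0⁻¹ ^ 2 * γ ^ 2 / (4 * π)) * ((L : ℝ) ^ (2 * ν + 3) / (2 * ν + 2)) :=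
        mul_le_mul_of_nonneg_left hsum (by positivity)
    _ = 9 * d0⁻¹ ^ 2 / (8 * π * (2 * ν + 2)) * γ ^ 2 * (L : ℝ) ^ (2 * ν + 4) := by
        rw [hpow]
        field_simp
        ring

lemma integrable_Y {Ω : Type*} [MeasurableSpace Ω] (μ : Measure Ω) [IsFiniteMeasure μ]
    (Y : ℕ → ℤ → Ω → ℝ) (hYmeas : ∀ l m, Measurable (Y l m))
    (hYadd : ∀ (l : ℕ) (x : Ω), ∑ m ∈ Idx l, (Y l m x) ^ 2 ≤ (2 * (l : ℝ) + 1) / (4 * π))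
    (l : ℕ) (m : ℤ) (hm : m ∈ Idx l) : Integrable (Y l m) μ := by
  refine Integrable.of_bound (hYmeas l m).aestronglyMeasurable
    (Real.sqrt ((2 * (l : ℝ) + 1) / (4 * π))) (ae_of_all _ fun x => ?_)
  rw [Real.norm_eq_abs]
  refine Real.abs_le_sqrt (le_trans ?_ (hYadd l x))
  exact Finset.single_le_sum (f := fun m => (Y l m x) ^ 2) (fun _ _ => sq_nonneg _) hm

/-- Harmonics of positive degree have mean zero, being orthogonal to the constant `Y^0_0`. -/
lemma integral_Y {Ω : Type*} [MeasurableSpace Ω] (μ : Measure Ω) (Y : ℕ → ℤ → Ω → ℝ)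
    (hYorth : ∀ l₁ : ℕ, ∀ m₁ ∈ Idx l₁, ∀ l₂ : ℕ, ∀ m₂ ∈ Idx l₂,
      ∫ x, Y l₁ m₁ x * Y l₂ m₂ x ∂μ = if l₁ = l₂ ∧ m₁ = m₂ then 1 else 0)
    (hY00 : ∀ x : Ω, Y 0 0 x = (Real.sqrt (4 * π))⁻¹)
    (l : ℕ) (hl : 1 ≤ l) (m : ℤ) (hm : m ∈ Idx l) : ∫ x, Y l m x ∂μ = 0 := by
  have h := hYorth l m hm 0 0 (by simp [Idx])
  rw [if_neg (by omega)] at h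
  simp only [hY00] at h
  rw [integral_mul_const] at h
  exact (mul_eq_zero.1 h).resolve_right (by positivity)

/-- **Pointwise control and positivity of the perturbed hypotheses.**
Under Assumption 1, with `C₂² = 9 d₀⁻²/(8π(2ν+2))`, for every even integer `L ≥ 2`,
every `γ > 0` and every choice of signs `θ_{lm} ∈ {−γ, +γ}`, the function
`f_θ = f₀ + ∑_{l=L/2}^{L−1} ∑_{m=−l}^{l} θ_{lm} φ_{lm}` satisfies
`|f_θ(x) − f₀(x)|² ≤ C₂² γ² L^{2ν+4}` for every `x ∈ S²`. In particular, if `s ≥ 1` and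
`γ² = c₁ L^{−2(ν+s+1)}` with `c₁ ≤ (ν+1)/(9π d₀⁻²)`, then `f_θ ≥ 0` everywhere, and
(since `∫ φ_{lm} = 0` for `l ≥ 1`) `f_θ` is a probability density on `S²`. -/
theorem statement15
    {Ω : Type*} [MeasurableSpace Ω]
    (μ : Measure Ω) (Y : ℕ → ℤ → Ω → ℝ)
    (hμ : μ Set.univ = ENNReal.ofReal (4 * π))
    (hYmeas : ∀ l m, Measurable (Y l m))
    (hYorth : ∀ l₁ : ℕ, ∀ m₁ ∈ Idx l₁, ∀ l₂ : ℕ, ∀ m₂ ∈ Idx l₂,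
      ∫ x, Y l₁ m₁ x * Y l₂ m₂ x ∂μ = if l₁ = l₂ ∧ m₁ = m₂ then 1 else 0)
    (hYadd : ∀ (l : ℕ) (x : Ω), ∑ m ∈ Idx l, (Y l m x) ^ 2 ≤ (2 * (l : ℝ) + 1) / (4 * π))
    (hY00 : ∀ x : Ω, Y 0 0 x = (Real.sqrt (4 * π))⁻¹)
    (A Ainv : ℕ → ℤ → ℤ → ℝ) (d0 d1 ν : ℝ) (hA1 : Assumption1 A Ainv d0 d1 ν) :
    ∀ L : ℕ, 2 ≤ L → L % 2 = 0 → ∀ γ : ℝ, 0 < γ →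
      ∀ θ : ℕ → ℤ → ℝ, IsSigns L γ θ →
        (∀ x : Ω, (ftheta Ainv Y L θ x - (4 * π)⁻¹) ^ 2
            ≤ 9 * d0⁻¹ ^ 2 / (8 * π * (2 * ν + 2)) * γ ^ 2 * (L : ℝ) ^ (2 * ν + 4)) ∧
        (∀ s c1 : ℝ, 1 ≤ s → γ ^ 2 = c1 * (L : ℝ) ^ (-(2 * (ν + s + 1))) →
          c1 ≤ (ν + 1) / (9 * π * d0⁻¹ ^ 2) →
          IsDensity μ (ftheta Ainv Y L θ)) := by
  obtain ⟨hd0, -, hν, -, hop, -⟩ := hA1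
  intro L hL hLe γ hγ θ hθ
  have hpt := pointwise_bound Y hYadd Ainv d0 ν γ hν hop L hL hLe θ hθ
  refine ⟨hpt, fun s c1 hs hγ2 hc1 => ⟨?_, fun x => ?_, ?_⟩⟩
  · unfold ftheta phiLB
    fun_prop
  · have hL0 : (0 : ℝ) < L := by positivity
    have hL1 : (1 : ℝ) ≤ L := by exact_mod_cast (by omega : 1 ≤ L)
    have hpow : (L : ℝ) ^ (-(2 * (ν + s + 1))) * (L : ℝ) ^ (2 * ν + 4) ≤ 1 := by
      rw [← Real.rpow_add hL0]
      exact Real.rpow_le_one_of_one_le_of_nonpos hL1 (by linarith)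
    -- `c₁` is only bounded above by assumption; its sign comes from `γ ^ 2 > 0`.
    have hc1pos : 0 < c1 := by
      by_contra! hcon
      have : c1 * (L : ℝ) ^ (-(2 * (ν + s + 1))) ≤ 0 :=
        mul_nonpos_of_nonpos_of_nonneg hcon (by positivity)
      nlinarith [pow_pos hγ 2]
    have hsq : (ftheta Ainv Y L θ x - (4 * π)⁻¹) ^ 2 ≤ ((4 * π)⁻¹) ^ 2 := by
      calc (ftheta Ainv Y L θ x - (4 * π)⁻¹) ^ 2
          ≤ 9 * d0⁻¹ ^ 2 / (8 * π * (2 * ν + 2)) * γ ^ 2 * (L : ℝ) ^ (2 * ν + 4) := hpt x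
        _ = 9 * d0⁻¹ ^ 2 / (8 * π * (2 * ν + 2)) * c1 *
              ((L : ℝ) ^ (-(2 * (ν + s + 1))) * (L : ℝ) ^ (2 * ν + 4)) := by
            rw [hγ2]
            ring
        _ ≤ 9 * d0⁻¹ ^ 2 / (8 * π * (2 * ν + 2)) * c1 * 1 :=
            mul_le_mul_of_nonneg_left hpow (by positivity)
        _ ≤ 9 * d0⁻¹ ^ 2 / (8 * π * (2 * ν + 2)) * ((ν + 1) / (9 * π * d0⁻¹ ^ 2)) * 1 := by
            gcongr
        _ = ((4 * π)⁻¹) ^ 2 := by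
            field_simp
            ring
    have habs := abs_le_of_sq_le_sq' hsq (by positivity)
    linarith [habs.1]
  · have : IsFiniteMeasure μ := ⟨by rw [hμ]; exact ENNReal.ofReal_lt_top⟩
    have hreal : μ.real Set.univ = 4 * π := by
      rw [Measure.real, hμ, ENNReal.toReal_ofReal (by positivity)]
    have hl1 : ∀ l ∈ Finset.Icc (L / 2) (L - 1), 1 ≤ l := by
      intro l hl
      rw [Finset.mem_Icc] at hl
      omega
    have hterm : ∀ l, ∀ m ∈ Idx l, ∀ n ∈ Idx l,
        Integrable (fun x => Ainv l n m * Y l n x) μ := fun l m _ n hn =>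
      (integrable_Y μ Y hYmeas hYadd l n hn).const_mul _
    have hphi : ∀ l, ∀ m ∈ Idx l, Integrable (fun x => θ l m * phiLB Ainv Y l m x) μ :=
      fun l m hm => (integrable_finsetSum _ (hterm l m hm)).const_mul _
    have hblock : ∀ l, Integrable (fun x => ∑ m ∈ Idx l, θ l m * phiLB Ainv Y l m x) μ :=
      fun l => integrable_finsetSum _ (hphi l)
    unfold ftheta
    rw [integral_add (integrable_const _) (integrable_finsetSum _ fun l _ => hblock l),
      integral_const, hreal, integral_finsetSum _ fun l _ => hblock l, Finset.sum_eq_zero]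
    · rw [smul_eq_mul, add_zero]
      exact mul_inv_cancel₀ (by positivity)
    · intro l hl
      rw [integral_finsetSum _ (hphi l)]
      refine Finset.sum_eq_zero fun m hm => ?_
      unfold phiLB
      rw [integral_const_mul, integral_finsetSum _ (hterm l m hm), Finset.sum_eq_zero, mul_zero]
      intro n hn
      rw [integral_const_mul, integral_Y μ Y hYorth hY00 l (hl1 l hl) n hn, mul_zero]

end SphericalTestR
end
end

section
/- Let p_θ = f₀ + ∑_{l=L/2}^{L−1} ∑_{m=−l}^{l} θ_{lm} Y^l_m with θ = (θ_{lm}) i.i.d. signs, P(θ_{lm} = ±γ) = 1/2, and assume that every p_θ is a probability density on S². Let P_θ denote the law of N i.i.d. observations with density p_θ, P_{f₀} the law of N i.i.d. uniform observations, and P_μ the mixture over the sign prior μ. Then E_{f₀}[ (dP_μ/dP_{f₀})² ] ≤ exp( 2 ∑_{l=L/2}^{L−1} (2l+1) sinh²(2π N γ²) ). In particular E_{f₀}[ dP_μ/dP_{f₀} ] = 1, and the chi-square divergence satisfies χ²(P_μ, P_{f₀}) ≤ exp( 2 ∑_{l=L/2}^{L−1} (2l+1) sinh²(2π N γ²) )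 − 1. -/
/-!
Writing `dP_t/dP_{f₀}(z) = ∏ᵢ 4π p_t(zᵢ)`, independence of the observations gives, for two sign
patterns `t, t'`,
`E_{f₀}[(dP_t/dP_{f₀}) (dP_{t'}/dP_{f₀})] = (4π ∫ p_t p_{t'})^N = (1 + 4πγ² ∑ₐ σₐ(t) σₐ(t'))^N`,
where `σₐ = ±1` are the signs: the constant term is orthogonal to every `Y^l_m` with `l ≥ 1`, and
orthonormality leaves only the diagonal (`integral_affine_mul_affine`). Since the densities are
nonnegative, the base of the power is nonnegative, so `1 + u ≤ exp u` bounds the power by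
`exp (4πNγ² ∑ₐ σₐ(t) σₐ(t'))`. Averaging over `t'` factorizes over the index block and gives
`cosh (4πNγ²)` to the size of the block (`sum_exp_sign_mul_sign`), whatever `t` is. Finally
`cosh (2y) = 1 + 2 sinh² y ≤ exp (2 sinh² y)`, and the block has `∑ (2l+1)` elements.
The statement on the chi-square divergence follows by expanding the square, because the
likelihood ratio has mean one.
-/

noncomputable section

open MeasureTheory Filter Finset Real

namespace SphericalTestR

variable {Ω : Type*} [MeasurableSpace Ω]

/-! ### Random signs -/

/-- The sign at index `a` encoded by the subset `t`: `+1` on `t` and `-1` off `t`. -/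
def sgn {ι : Type*} [DecidableEq ι] (t : Finset ι) (a : ι) : ℝ := if a ∈ t then 1 else -1

lemma cosh_two_mul_le_exp (y : ℝ) : Real.cosh (2 * y) ≤ Real.exp (2 * Real.sinh y ^ 2) := by
  have h := Real.add_one_le_exp (2 * Real.sinh y ^ 2)
  rw [Real.cosh_two_mul, Real.cosh_sq]
  linarith

/-- The moment generating function of the correlation of a fixed sign pattern with a uniformly
random one does not depend on the fixed pattern: it factorizes over the index set. -/
lemma sum_exp_sign_mul_sign {ι : Type*} [DecidableEq ι] (S t : Finset ι) (b : ℝ) :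
    ∑ t' ∈ S.powerset, Real.exp (b * ∑ a ∈ S, sgn t a * sgn t' a)
      = (2 * Real.cosh b) ^ S.card := by
  have h1 : ∀ t' ∈ S.powerset, Real.exp (b * ∑ a ∈ S, sgn t a * sgn t' a)
      = (∏ a ∈ t', Real.exp (b * sgn t a)) * ∏ a ∈ S \ t', Real.exp (-(b * sgn t a)) := by
    intro t' ht'
    rw [Finset.mem_powerset] at ht'
    rw [Finset.mul_sum, Real.exp_sum, ← Finset.prod_sdiff ht', mul_comm]
    congr 1
    · exact Finset.prod_congr rfl fun a ha => by simp [sgn, ha]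
    · refine Finset.prod_congr rfl fun a ha => ?_
      have : a ∉ t' := (Finset.mem_sdiff.1 ha).2
      simp [sgn, this]
  rw [Finset.sum_congr rfl h1, ← Finset.prod_add, ← Finset.prod_const]
  refine Finset.prod_congr rfl fun a _ => ?_
  rw [Real.cosh_eq]
  unfold sgn
  split_ifs
  · ring_nf
  · ring_nf

/-! ### Correlations and mixtures -/

/-- Inner product of two functions in the span of the constants and of an orthonormal family
orthogonal to the constants. -/
lemma integral_affine_mul_affine {ι : Type*} [DecidableEq ι] (μ : Measure Ω) [IsFiniteMeasure μ]
    (S : Finset ι) (Z : ι → Ω → ℝ)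
    (hi : ∀ a ∈ S, Integrable (Z a) μ)
    (hii : ∀ a ∈ S, ∀ b ∈ S, Integrable (fun x => Z a x * Z b x) μ)
    (h0 : ∀ a ∈ S, ∫ x, Z a x ∂μ = 0)
    (ho : ∀ a ∈ S, ∀ b ∈ S, ∫ x, Z a x * Z b x ∂μ = if a = b then 1 else 0)
    (c : ℝ) (u v : ι → ℝ) :
    ∫ x, (c + ∑ a ∈ S, u a * Z a x) * (c + ∑ a ∈ S, v a * Z a x) ∂μ
      = c ^ 2 * μ.real Set.univ + ∑ a ∈ S, u a * v a := by
  have e : ∀ x, (c + ∑ a ∈ S, u a * Z a x) * (c + ∑ a ∈ S, v a * Z a x)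
      = (c ^ 2 + ∑ a ∈ S, (c * (u a + v a)) * Z a x)
        + ∑ a ∈ S, ∑ b ∈ S, (u a * v b) * (Z a x * Z b x) := by
    intro x
    have h1 : ∑ a ∈ S, (c * (u a + v a)) * Z a x
        = c * ∑ a ∈ S, u a * Z a x + c * ∑ a ∈ S, v a * Z a x := by
      rw [Finset.mul_sum, Finset.mul_sum, ← Finset.sum_add_distrib]
      exact Finset.sum_congr rfl fun a _ => by ring
    have h2 : ∑ a ∈ S, ∑ b ∈ S, (u a * v b) * (Z a x * Z b x)
        = (∑ a ∈ S, u a * Z a x) * ∑ b ∈ S, v b * Z b x := by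
      rw [Finset.sum_mul_sum]
      exact Finset.sum_congr rfl fun a _ => Finset.sum_congr rfl fun b _ => by ring
    rw [h1, h2]; ring
  have i1 : Integrable (fun x => ∑ a ∈ S, (c * (u a + v a)) * Z a x) μ :=
    integrable_finsetSum _ fun a ha => (hi a ha).const_mul _
  have i2 : ∀ a ∈ S, Integrable (fun x => ∑ b ∈ S, (u a * v b) * (Z a x * Z b x)) μ :=
    fun a ha => integrable_finsetSum _ fun b hb => (hii a ha b hb).const_mul _
  have i3 : Integrable (fun x => ∑ a ∈ S, ∑ b ∈ S, (u a * v b) * (Z a x * Z b x)) μ :=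
    integrable_finsetSum _ i2
  have i0 : Integrable (fun x => c ^ 2 + ∑ a ∈ S, (c * (u a + v a)) * Z a x) μ :=
    (integrable_const _).add i1
  simp_rw [e]
  rw [integral_add i0 i3, integral_add (integrable_const _) i1,
    integral_finsetSum _ fun a ha => (hi a ha).const_mul _, integral_finsetSum _ i2]
  have z : ∑ a ∈ S, ∫ x, (c * (u a + v a)) * Z a x ∂μ = 0 :=
    Finset.sum_eq_zero fun a ha => by rw [integral_const_mul, h0 a ha, mul_zero]
  rw [z, integral_const, smul_eq_mul, add_zero, mul_comm]
  congr 1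
  refine Finset.sum_congr rfl fun a ha => ?_
  rw [integral_finsetSum _ fun b hb => (hii a ha b hb).const_mul _]
  rw [Finset.sum_eq_single_of_mem a ha]
  · rw [integral_const_mul, ho a ha a ha]; simp
  · intro b hb hba
    rw [integral_const_mul, ho a ha b hb, if_neg (Ne.symm hba), mul_zero]

/-- The index block is the disjoint union over the degrees `l` of the orders `-l ≤ m ≤ l`. -/
lemma sum_block {M : Type*} [AddCommMonoid M] (I : Finset ℕ) (g : ℕ × ℤ → M) :
    ∑ a ∈ I.biUnion (fun l => (Idx l).image fun m => ((l, m) : ℕ × ℤ)), g a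
      = ∑ l ∈ I, ∑ m ∈ Idx l, g (l, m) := by
  rw [Finset.sum_biUnion]
  · refine Finset.sum_congr rfl fun l _ => ?_
    rw [Finset.sum_image]
    intro m _ m' _ h
    exact (Prod.mk.inj h).2
  · intro l _ l' _ hne
    rw [Function.onFun, Finset.disjoint_left]
    intro a ha ha'
    obtain ⟨m, _, rfl⟩ := Finset.mem_image.1 ha
    obtain ⟨m', _, h⟩ := Finset.mem_image.1 ha'
    exact hne (Prod.mk.inj h).1.symm

/-- Second-moment method for a finite uniform mixture of product densities `∏ᵢ q t (zᵢ)` against a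
product probability measure: the second moment of the mixture is the average over pairs of the
`N`-th powers of the one-observation correlations, and its mean is one. -/
lemma mixture_moments {T : Type*} (ν : Measure Ω) [IsProbabilityMeasure ν] (N : ℕ)
    (P : Finset T) (hP : P.Nonempty) (q : T → Ω → ℝ)
    (hi : ∀ t ∈ P, Integrable (q t) ν) (h1 : ∀ t ∈ P, ∫ x, q t x ∂ν = 1)
    (hii : ∀ t ∈ P, ∀ t' ∈ P, Integrable (fun x => q t x * q t' x) ν)
    (r : (Fin N → Ω) → ℝ)
    (hr : ∀ z, r z = ((P.card : ℝ))⁻¹ * ∑ t ∈ P, ∏ i : Fin N, q t (z i)) :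
    (∫ z, r z ^ 2 ∂(Measure.pi fun _ : Fin N => ν))
        = ((P.card : ℝ)⁻¹) ^ 2 * ∑ t ∈ P, ∑ t' ∈ P, (∫ x, q t x * q t' x ∂ν) ^ N ∧
    (∫ z, r z ∂(Measure.pi fun _ : Fin N => ν)) = 1 ∧
    (∫ z, (r z - 1) ^ 2 ∂(Measure.pi fun _ : Fin N => ν))
        = (∫ z, r z ^ 2 ∂(Measure.pi fun _ : Fin N => ν)) - 1 := by
  have hc : (P.card : ℝ) ≠ 0 := by exact_mod_cast hP.card_pos.ne'
  have e2 : ∀ z, r z ^ 2 = ((P.card : ℝ)⁻¹) ^ 2 *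
      ∑ t ∈ P, ∑ t' ∈ P, ∏ i : Fin N, (q t (z i) * q t' (z i)) := by
    intro z
    rw [hr, mul_pow, sq (∑ t ∈ P, _), Finset.sum_mul_sum]
    simp_rw [Finset.prod_mul_distrib]
  have j1 : ∀ t ∈ P, Integrable (fun z : Fin N → Ω => ∏ i : Fin N, q t (z i))
      (Measure.pi fun _ : Fin N => ν) := fun t ht =>
    Integrable.fintype_prod (f := fun _ : Fin N => q t) fun _ => hi t ht
  have j2 : ∀ t ∈ P, ∀ t' ∈ P,
      Integrable (fun z : Fin N → Ω => ∏ i : Fin N, (q t (z i) * q t' (z i)))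
      (Measure.pi fun _ : Fin N => ν) := fun t ht t' ht' =>
    Integrable.fintype_prod (f := fun _ : Fin N => fun x => q t x * q t' x) fun _ => hii t ht t' ht'
  have j3 : ∀ t ∈ P,
      Integrable (fun z : Fin N → Ω => ∑ t' ∈ P, ∏ i : Fin N, (q t (z i) * q t' (z i)))
      (Measure.pi fun _ : Fin N => ν) := fun t ht => integrable_finsetSum _ (j2 t ht)
  have ir : Integrable r (Measure.pi fun _ : Fin N => ν) := by
    rw [funext hr]
    exact (integrable_finsetSum _ j1).const_mul _
  have ir2 : Integrable (fun z => r z ^ 2) (Measure.pi fun _ : Fin N => ν) := by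
    rw [funext e2]
    exact (integrable_finsetSum _ j3).const_mul _
  have hmean : (∫ z, r z ∂(Measure.pi fun _ : Fin N => ν)) = 1 := by
    simp_rw [hr]
    rw [integral_const_mul, integral_finsetSum _ j1]
    have : ∀ t ∈ P, ∫ z : Fin N → Ω, ∏ i : Fin N, q t (z i) ∂(Measure.pi fun _ : Fin N => ν)
        = 1 := by
      intro t ht
      rw [integral_fintype_prod_eq_prod (f := fun _ : Fin N => q t)]
      simp [h1 t ht]
    rw [Finset.sum_congr rfl this]
    simp [hc]
  refine ⟨?_, hmean, ?_⟩
  · simp_rw [e2]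
    rw [integral_const_mul, integral_finsetSum _ j3]
    congr 1
    refine Finset.sum_congr rfl fun t ht => ?_
    rw [integral_finsetSum _ (j2 t ht)]
    refine Finset.sum_congr rfl fun t' _ => ?_
    rw [integral_fintype_prod_eq_prod (f := fun _ : Fin N => fun x => q t x * q t' x)]
    simp
  · have e : ∀ z, (r z - 1) ^ 2 = r z ^ 2 - 2 * r z + 1 := fun z => by ring
    have i0 : Integrable (fun z => r z ^ 2 - 2 * r z) (Measure.pi fun _ : Fin N => ν) :=
      ir2.sub (ir.const_mul 2)
    simp_rw [e]
    rw [integral_add i0 (integrable_const _),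
      integral_sub ir2 (ir.const_mul 2), integral_const_mul, hmean]
    simp
    ring

/-! ### The chi-square bound -/

/-- **Chi-square bound for the mixture over sign priors.**
Let `p_θ = f₀ + ∑_{l=L/2}^{L−1} ∑_m θ_{lm} Y^l_m` with i.i.d. signs
`P(θ_{lm} = ±γ) = 1/2` (sign patterns being indexed by the subsets `t` of the index
block `SS`, `θ_{lm} = γ` iff `(l,m) ∈ t`), and assume every `p_θ` is a probability
density on `S²`. Let `P_θ` be the law of `N` i.i.d. observations with density `p_θ`,
`P_{f₀}` the law of `N` i.i.d. uniform observations, and `P_μ` the mixture over the sign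
prior; its likelihood ratio is `dP_μ/dP_{f₀}(z) = E_prior ∏_i 4π p_θ(z_i)`. Then
`E_{f₀}[(dP_μ/dP_{f₀})²] ≤ exp( 2 ∑_{l=L/2}^{L−1} (2l+1) sinh²(2πNγ²) )`; in particular
`E_{f₀}[dP_μ/dP_{f₀}] = 1` and
`χ²(P_μ, P_{f₀}) = E_{f₀}[(dP_μ/dP_{f₀} − 1)²] ≤ exp( 2 ∑ (2l+1) sinh²(2πNγ²) ) − 1`. -/
theorem statement17
    {Ω : Type*} [MeasurableSpace Ω]
    (μ : Measure Ω) (Y : ℕ → ℤ → Ω → ℝ)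
    (hμ : μ Set.univ = ENNReal.ofReal (4 * π))
    (hYmeas : ∀ l m, Measurable (Y l m))
    (hYorth : ∀ l₁ : ℕ, ∀ m₁ ∈ Idx l₁, ∀ l₂ : ℕ, ∀ m₂ ∈ Idx l₂,
      ∫ x, Y l₁ m₁ x * Y l₂ m₂ x ∂μ = if l₁ = l₂ ∧ m₁ = m₂ then 1 else 0)
    (hYadd : ∀ (l : ℕ) (x : Ω), ∑ m ∈ Idx l, (Y l m x) ^ 2 ≤ (2 * (l : ℝ) + 1) / (4 * π))
    (hY00 : ∀ x : Ω, Y 0 0 x = (Real.sqrt (4 * π))⁻¹)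
    (L : ℕ) (hL : 2 ≤ L) (hLeven : L % 2 = 0) (γ : ℝ) (hγ : 0 < γ) (N : ℕ)
    -- the index block SS = {(l,m) : L/2 ≤ l ≤ L-1, -l ≤ m ≤ l}
    (SS : Finset (ℕ × ℤ))
    (hSS : SS = (Finset.Icc (L / 2) (L - 1)).biUnion fun l =>
      (Idx l).image fun m => ((l, m) : ℕ × ℤ))
    -- the perturbed densities p_θ, indexed by sign patterns t ⊆ SS
    (p : Finset (ℕ × ℤ) → Ω → ℝ)
    (hp : ∀ (t : Finset (ℕ × ℤ)) (x : Ω),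
      p t x = (4 * π)⁻¹ + ∑ l ∈ Finset.Icc (L / 2) (L - 1), ∑ m ∈ Idx l,
        (if (l, m) ∈ t then γ else -γ) * Y l m x)
    (hdens : ∀ t ∈ SS.powerset, IsDensity μ (p t))
    -- the likelihood ratio dP_μ/dP_{f₀} of the mixture w.r.t. the uniform law
    (r : (Fin N → Ω) → ℝ)
    (hr : ∀ z : Fin N → Ω,
      r z = ((SS.powerset.card : ℝ))⁻¹ *
        ∑ t ∈ SS.powerset, ∏ i : Fin N, (4 * π * p t (z i))) :
    (∫ z, r z ^ 2 ∂(lawN μ N f0))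
        ≤ Real.exp (2 * (∑ l ∈ Finset.Icc (L / 2) (L - 1), (2 * (l : ℝ) + 1)) *
            Real.sinh (2 * π * N * γ ^ 2) ^ 2) ∧
    (∫ z, r z ∂(lawN μ N f0)) = 1 ∧
    (∫ z, (r z - 1) ^ 2 ∂(lawN μ N f0))
        ≤ Real.exp (2 * (∑ l ∈ Finset.Icc (L / 2) (L - 1), (2 * (l : ℝ) + 1)) *
            Real.sinh (2 * π * N * γ ^ 2) ^ 2) - 1 := by
  have hπ : (0 : ℝ) < 4 * π := by positivity
  have : IsFiniteMeasure μ := ⟨by rw [hμ]; exact ENNReal.ofReal_lt_top⟩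
  have hμr : μ.real Set.univ = 4 * π := by
    rw [Measure.real, hμ, ENNReal.toReal_ofReal hπ.le]
  have hlaw : law μ (f0 : Ω → ℝ) = ENNReal.ofReal (4 * π)⁻¹ • μ := by
    simp [law, f0, withDensity_const]
  have hprob : IsProbabilityMeasure (law μ (f0 : Ω → ℝ)) := ⟨by
    rw [hlaw, Measure.smul_apply, hμ, smul_eq_mul, ← ENNReal.ofReal_mul (by positivity),
      inv_mul_cancel₀ hπ.ne', ENNReal.ofReal_one]⟩
  have hint : ∀ g : Ω → ℝ, ∫ x, g x ∂(law μ f0) = (4 * π)⁻¹ * ∫ x, g x ∂μ := by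
    intro g
    rw [hlaw, integral_smul_measure, ENNReal.toReal_ofReal (by positivity), smul_eq_mul]
  have hinteg : ∀ g : Ω → ℝ, Integrable g μ → Integrable g (law μ f0) := by
    intro g hg
    rw [hlaw]
    exact hg.smul_measure ENNReal.ofReal_ne_top
  have hmem : ∀ a ∈ SS, 1 ≤ a.1 ∧ a.2 ∈ Idx a.1 := by
    intro a ha
    rw [hSS] at ha
    obtain ⟨l, hl, ha⟩ := Finset.mem_biUnion.1 ha
    obtain ⟨m, hm, rfl⟩ := Finset.mem_image.1 ha
    have := (Finset.mem_Icc.1 hl).1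
    exact ⟨by simp only; omega, hm⟩
  -- the addition formula makes each harmonic bounded
  have hbd : ∀ a ∈ SS, ∀ x, |Y a.1 a.2 x| ≤ (2 * (a.1 : ℝ) + 1) / (4 * π) + 1 := by
    intro a ha x
    have h1 : Y a.1 a.2 x ^ 2 ≤ (2 * (a.1 : ℝ) + 1) / (4 * π) :=
      (Finset.single_le_sum (f := fun m => Y a.1 m x ^ 2) (fun m _ => sq_nonneg _)
        (hmem a ha).2).trans (hYadd a.1 x)
    rw [← sq_abs] at h1
    nlinarith [sq_nonneg (|Y a.1 a.2 x| - 1), abs_nonneg (Y a.1 a.2 x)]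
  have hi : ∀ a ∈ SS, Integrable (fun x => Y a.1 a.2 x) μ := fun a ha =>
    Integrable.of_bound (hYmeas _ _).aestronglyMeasurable _
      (Filter.Eventually.of_forall fun x => hbd a ha x)
  have hii : ∀ a ∈ SS, ∀ b ∈ SS, Integrable (fun x => Y a.1 a.2 x * Y b.1 b.2 x) μ :=
    fun a ha b hb => (hi b hb).bdd_mul (hYmeas _ _).aestronglyMeasurable
      (Filter.Eventually.of_forall fun x => hbd a ha x)
  have h0 : ∀ a ∈ SS, ∫ x, Y a.1 a.2 x ∂μ = 0 := by
    intro a ha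
    have h := hYorth 0 0 (by simp [Idx]) a.1 a.2 (hmem a ha).2
    have hne : ¬ (0 = a.1 ∧ (0 : ℤ) = a.2) := fun h => by have := (hmem a ha).1; omega
    rw [if_neg hne] at h
    simp_rw [hY00] at h
    rw [integral_const_mul] at h
    exact (mul_eq_zero.1 h).resolve_left (by positivity)
  have ho : ∀ a ∈ SS, ∀ b ∈ SS,
      ∫ x, Y a.1 a.2 x * Y b.1 b.2 x ∂μ = if a = b then 1 else 0 := by
    intro a ha b hb
    rw [hYorth _ _ (hmem a ha).2 _ _ (hmem b hb).2]
    simp only [Prod.ext_iff]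
  have hp' : ∀ t x, p t x = (4 * π)⁻¹ + ∑ a ∈ SS, (γ * sgn t a) * Y a.1 a.2 x := by
    intro t x
    rw [hp, hSS, sum_block]
    congr 1
    refine Finset.sum_congr rfl fun l _ => Finset.sum_congr rfl fun m _ => ?_
    unfold sgn
    split_ifs <;> ring
  have hcorr : ∀ t t' : Finset (ℕ × ℤ), ∫ x, (4 * π * p t x) * (4 * π * p t' x) ∂(law μ f0)
      = 1 + 4 * π * γ ^ 2 * ∑ a ∈ SS, sgn t a * sgn t' a := by
    intro t t'
    have e : ∀ x, (4 * π * p t x) * (4 * π * p t' x) = (4 * π) ^ 2 * (p t x * p t' x) :=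
      fun x => by ring
    simp_rw [hint, e]
    rw [integral_const_mul]
    simp_rw [hp']
    rw [integral_affine_mul_affine μ SS (fun a x => Y a.1 a.2 x) hi hii h0 ho, hμr]
    have e2 : ∑ a ∈ SS, (γ * sgn t a) * (γ * sgn t' a)
        = γ ^ 2 * ∑ a ∈ SS, sgn t a * sgn t' a := by
      rw [Finset.mul_sum]
      exact Finset.sum_congr rfl fun a _ => by ring
    rw [e2]
    field_simp
  have hpi : ∀ t, Integrable (p t) μ := by
    intro t
    rw [funext (hp' t)]
    exact (integrable_const _).add (integrable_finsetSum _ fun a ha => (hi a ha).const_mul _)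
  have hpb : ∀ t, ∃ C, ∀ x, ‖p t x‖ ≤ C := by
    intro t
    refine ⟨|(4 * π)⁻¹| + ∑ a ∈ SS, |γ * sgn t a| * ((2 * (a.1 : ℝ) + 1) / (4 * π) + 1),
      fun x => ?_⟩
    rw [hp', Real.norm_eq_abs]
    refine (abs_add_le _ _).trans (add_le_add le_rfl ((Finset.abs_sum_le_sum_abs _ _).trans ?_))
    refine Finset.sum_le_sum fun a ha => ?_
    rw [abs_mul]
    exact mul_le_mul_of_nonneg_left (hbd a ha x) (abs_nonneg _)
  obtain ⟨hsq, hmean, hvar⟩ := mixture_moments (law μ (f0 : Ω → ℝ)) N SS.powerset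
    ⟨∅, Finset.empty_mem_powerset _⟩ (fun t x => 4 * π * p t x)
    (fun t _ => hinteg _ ((hpi t).const_mul _))
    (fun t ht => by
      rw [hint, integral_const_mul, (hdens t ht).2.2, mul_one, inv_mul_cancel₀ hπ.ne'])
    (fun t ht t' _ => by
      obtain ⟨C, hC⟩ := hpb t
      have h := (((hpi t').bdd_mul (hdens t ht).1.aestronglyMeasurable
        (Filter.Eventually.of_forall hC)).const_mul ((4 * π) ^ 2))
      refine hinteg _ (h.congr (Filter.Eventually.of_forall fun x => ?_))
      simp only
      ring) r hr
  have hcard : (SS.card : ℝ) = ∑ l ∈ Finset.Icc (L / 2) (L - 1), (2 * (l : ℝ) + 1) := by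
    rw [Finset.card_eq_sum_ones, hSS, sum_block]
    push_cast
    refine Finset.sum_congr rfl fun l _ => ?_
    have : (Idx l).card = 2 * l + 1 := by
      simp only [Idx, Int.card_Icc]
      omega
    simp [this]
  have hbound : (∫ z, r z ^ 2 ∂(lawN μ N f0))
      ≤ Real.exp (2 * (∑ l ∈ Finset.Icc (L / 2) (L - 1), (2 * (l : ℝ) + 1)) *
          Real.sinh (2 * π * N * γ ^ 2) ^ 2) := by
    unfold lawN
    rw [hsq]
    have hpow : ∀ t ∈ SS.powerset, ∀ t' ∈ SS.powerset,
        (∫ x, (4 * π * p t x) * (4 * π * p t' x) ∂(law μ f0)) ^ N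
          ≤ Real.exp (2 * (2 * π * N * γ ^ 2) * ∑ a ∈ SS, sgn t a * sgn t' a) := by
      intro t ht t' ht'
      have hnn : 0 ≤ ∫ x, (4 * π * p t x) * (4 * π * p t' x) ∂(law μ f0) :=
        integral_nonneg fun x => mul_nonneg (mul_nonneg hπ.le ((hdens t ht).2.1 x))
          (mul_nonneg hπ.le ((hdens t' ht').2.1 x))
      -- nonnegativity of the densities is what allows raising `1 + u ≤ exp u` to the power `N`
      refine (pow_le_pow_left₀ hnn (b := Real.exp (4 * π * γ ^ 2 *
        ∑ a ∈ SS, sgn t a * sgn t' a)) ?_ N).trans (le_of_eq ?_)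
      · rw [hcorr, add_comm]
        exact Real.add_one_le_exp _
      · rw [← Real.exp_nat_mul]
        congr 1
        ring
    have hsum : ∑ t ∈ SS.powerset, ∑ t' ∈ SS.powerset,
        (∫ x, (4 * π * p t x) * (4 * π * p t' x) ∂(law μ f0)) ^ N
          ≤ 2 ^ SS.card * (2 * Real.cosh (2 * (2 * π * N * γ ^ 2))) ^ SS.card := by
      refine (Finset.sum_le_sum fun t ht => Finset.sum_le_sum (hpow t ht)).trans (le_of_eq ?_)
      simp_rw [sum_exp_sign_mul_sign]
      simp
    refine (mul_le_mul_of_nonneg_left hsum (by positivity)).trans ?_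
    have e : (((SS.powerset.card : ℝ))⁻¹) ^ 2 *
        (2 ^ SS.card * (2 * Real.cosh (2 * (2 * π * N * γ ^ 2))) ^ SS.card)
          = Real.cosh (2 * (2 * π * N * γ ^ 2)) ^ SS.card := by
      rw [Finset.card_powerset, mul_pow]
      push_cast
      field_simp
    rw [e, ← hcard]
    refine (pow_le_pow_left₀ (Real.cosh_pos _).le (cosh_two_mul_le_exp _) _).trans (le_of_eq ?_)
    rw [← Real.exp_nat_mul]
    congr 1
    ring
  refine ⟨hbound, hmean, ?_⟩
  have hvar' : (∫ z, (r z - 1) ^ 2 ∂(lawN μ N f0)) = (∫ z, r z ^ 2 ∂(lawN μ N f0)) - 1 := hvar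
  rw [hvar']
  linarith

end SphericalTestR
end
end
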